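/- arXiv:2110.06343 — 3 statements merged into one kernel-verified Lean document; each statement's English description precedes it below -/
import Mathlib

section
/- Let M with bundle map q : M → X be an upper semicontinuous Banach bundle over a Hausdorff space X, and let Γ be a vector space of continuous sections of M such that {f(x) : f ∈ Γ} is dense in the fibre M(x) for every x ∈ X. Let (m_i)_{i ∈ I} be a net in M and let m ∈ M. Then the following are equivalent: (1) m_i → m in M; (2) q(m_i) → q(m) in X and for every ε > 0 there exists g ∈ Γ such that ‖m − g(q(m))‖ < ε and ‖m_i − g(q(m_i))‖ < ε for all sufficiently large i; (3) q(m_i) → q(m) in X and for every f ∈ Γ one has limsup_i ‖m_i − f(q(m_i))‖ ≤ ‖m − f(q(m))‖. -/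
open Filter Topology

structure FibredBanach (X : Type*) (M : Type*) (q : M → X) where
  surj : Function.Surjective q
  normedGroup : ∀ x : X, NormedAddCommGroup {m : M // q m = x}
  normedSpace : ∀ x : X, @NormedSpace ℂ {m : M // q m = x} _ (normedGroup x).toSeminormedAddCommGroup
  complete : ∀ x : X, letI := normedGroup x; CompleteSpace {m : M // q m = x}

namespace FibredBanach

variable {X M : Type*} {q : M → X}

noncomputable def norm (B : FibredBanach X M q) (m : M) : ℝ :=
  letI := B.normedGroup (q m)
  ‖(⟨m, rfl⟩ : {n : M // q n = q m})‖

noncomputable def zeroAt (B : FibredBanach X M q) (x : X) : M :=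
  letI := B.normedGroup x
  ((0 : {n : M // q n = x}) : M)

noncomputable def add (B : FibredBanach X M q) (m m' : M) (h : q m' = q m) : M :=
  letI := B.normedGroup (q m)
  ((((⟨m, rfl⟩ : {n : M // q n = q m}) + (⟨m', h⟩ : {n : M // q n = q m})) : {n : M // q n = q m}) : M)

noncomputable def smul (B : FibredBanach X M q) (c : ℂ) (m : M) : M :=
  letI := B.normedGroup (q m)
  letI := B.normedSpace (q m)
  (((c • (⟨m, rfl⟩ : {n : M // q n = q m})) : {n : M // q n = q m}) : M)

end FibredBanach

structure USCBanachBundle (X : Type*) (M : Type*) [TopologicalSpace X] [TopologicalSpace M]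
    (q : M → X) extends FibredBanach X M q where
  cont : Continuous q
  usc1 : UpperSemicontinuous toFibredBanach.norm
  usc2 : Continuous fun p : {p : M × M // q p.1 = q p.2} =>
    toFibredBanach.add p.1.1 p.1.2 p.2.symm
  usc3 : ∀ c : ℂ, Continuous (toFibredBanach.smul c)
  usc4 : ∀ (l : Filter M) (x : X), Filter.Tendsto q l (nhds x) →
    Filter.Tendsto toFibredBanach.norm l (nhds 0) → l ≤ nhds (toFibredBanach.zeroAt x)

/-- The distance, measured in the Banach fibre `M(q m)`, between a point `m` of the total space
and the value at `q m` of a section `f` of the bundle. -/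
noncomputable def FibredBanach.secDist {X M : Type*} {q : M → X} (B : FibredBanach X M q)
    (m : M) (f : (x : X) → {n : M // q n = x}) : ℝ :=
  letI := B.normedGroup (q m)
  ‖(⟨m, rfl⟩ : {n : M // q n = q m}) - f (q m)‖

namespace USCAux

variable {X M : Type*} {q : M → X}

theorem coe_prop' {x : X} (u : {m : M // q m = x}) : q u.1 = x := u.2

theorem norm_coe (B : FibredBanach X M q) {x : X} (u : {m : M // q m = x}) :
    B.norm u.1 = (letI := B.normedGroup x; ‖u‖) := by
  obtain ⟨u, rfl⟩ := u
  rfl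

theorem add_coe (B : FibredBanach X M q) {x : X} (u v : {m : M // q m = x})
    (h : q v.1 = q u.1) :
    B.add u.1 v.1 h = ((letI := B.normedGroup x; u + v : {m : M // q m = x}) : M) := by
  obtain ⟨u, rfl⟩ := u
  rfl

theorem smul_coe (B : FibredBanach X M q) {x : X} (c : ℂ) (u : {m : M // q m = x}) :
    B.smul c u.1 = ((letI := B.normedGroup x; letI := B.normedSpace x;
      c • u : {m : M // q m = x}) : M) := by
  obtain ⟨u, rfl⟩ := u
  rfl

theorem q_smul (B : FibredBanach X M q) (c : ℂ) (u : M) : q (B.smul c u) = q u := by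
  unfold FibredBanach.smul
  exact coe_prop' _

theorem norm_nonneg' (B : FibredBanach X M q) (u : M) : 0 ≤ B.norm u := by
  letI := B.normedGroup (q u)
  exact norm_nonneg (⟨u, rfl⟩ : {n : M // q n = q u})

variable [TopologicalSpace X] [TopologicalSpace M]

theorem zero_nhds (B : USCBanachBundle X M q) (x : X) {W : Set M}
    (hW : W ∈ 𝓝 (B.zeroAt x)) :
    ∃ N ∈ 𝓝 x, ∃ δ : ℝ, 0 < δ ∧ ∀ b, q b ∈ N → B.norm b < δ → b ∈ W := by
  have h := B.usc4 (comap q (𝓝 x) ⊓ comap B.norm (𝓝 0)) x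
    (tendsto_comap.mono_left inf_le_left) (tendsto_comap.mono_left inf_le_right) hW
  obtain ⟨A, hA, C, hC, hAC⟩ := Filter.mem_inf_iff_superset.1 h
  obtain ⟨N, hN, hNA⟩ := mem_comap.1 hA
  obtain ⟨D, hD, hDC⟩ := mem_comap.1 hC
  obtain ⟨δ, hδ, hball⟩ := Metric.mem_nhds_iff.1 hD
  refine ⟨N, hN, δ, hδ, fun b hb hn => hAC ⟨hNA hb, hDC (hball ?_)⟩⟩
  have := norm_nonneg' B.toFibredBanach b
  simpa [abs_of_nonneg this] using hn

theorem add_nhds (B : USCBanachBundle X M q) (m : M) {U : Set M} (hU : U ∈ 𝓝 m) :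
    ∃ V ∈ 𝓝 m, ∃ N ∈ 𝓝 (q m), ∃ δ : ℝ, 0 < δ ∧
      ∀ a ∈ V, ∀ b, ∀ h : q b = q a, q b ∈ N → B.norm b < δ → B.add a b h ∈ U := by
  have hz : q (B.zeroAt (q m)) = q m := by
    unfold FibredBanach.zeroAt
    exact coe_prop' _
  have h0 : B.add m (B.zeroAt (q m)) hz = m := by
    letI := B.normedGroup (q m)
    have := add_coe B.toFibredBanach (⟨m, rfl⟩ : {n : M // q n = q m}) 0 hz
    rw [add_zero] at this
    exact this
  have hc := B.usc2.continuousAt (x := ⟨(m, B.zeroAt (q m)), hz.symm⟩)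
  have hc' := hc (show U ∈ 𝓝 (B.add m (B.zeroAt (q m)) hz) by rw [h0]; exact hU)
  rw [mem_map, nhds_subtype_eq_comap, mem_comap] at hc'
  obtain ⟨T, hT, hTU⟩ := hc'
  obtain ⟨V, hV, W, hW, hVW⟩ := mem_nhds_prod_iff.1 hT
  obtain ⟨N, hN, δ, hδ, hb⟩ := zero_nhds B (q m) hW
  refine ⟨V, hV, N, hN, δ, hδ, fun a ha b h hbN hbδ => ?_⟩
  have : (⟨(a, b), h.symm⟩ : {p : M × M // q p.1 = q p.2}) ∈ Subtype.val ⁻¹' T :=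
    hVW ⟨ha, hb b hbN hbδ⟩
  exact hTU this

theorem secDist_usc (B : USCBanachBundle X M q) (f : (x : X) → {m : M // q m = x})
    (hf : Continuous fun x => (f x : M)) :
    UpperSemicontinuous fun m => B.secDist m f := by
  have hq : ∀ m, q m = q (B.smul (-1) (f (q m))) := fun m => by
    rw [q_smul B.toFibredBanach]; exact (f (q m)).2.symm
  have hc : Continuous fun m : M =>
      (⟨(m, B.smul (-1) (f (q m))), hq m⟩ : {p : M × M // q p.1 = q p.2}) :=
    (continuous_id.prodMk ((B.usc3 (-1)).comp (hf.comp B.cont))).subtype_mk _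
  have h2 := B.usc1.comp (B.usc2.comp hc)
  convert h2 using 1
  funext m
  letI := B.normedGroup (q m)
  letI := B.normedSpace (q m)
  have e1 := smul_coe B.toFibredBanach (-1) (f (q m))
  have e2 := add_coe B.toFibredBanach (⟨m, rfl⟩ : {n : M // q n = q m}) ((-1 : ℂ) • f (q m))
    (coe_prop' _)
  have e3 := norm_coe B.toFibredBanach
    ((⟨m, rfl⟩ : {n : M // q n = q m}) + ((-1 : ℂ) • f (q m)))
  have e4 : B.add m (B.smul (-1) (f (q m))) (hq m).symm =
    (((⟨m, rfl⟩ : {n : M // q n = q m}) + ((-1 : ℂ) • f (q m)) : {n : M // q n = q m}) : M) := by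
    rw [← e2]
    congr 1
  show B.secDist m f = B.norm (B.add m (B.smul (-1) (f (q m))) (hq m).symm)
  rw [e4, e3, neg_one_smul, ← sub_eq_add_neg]
  rfl

end USCAux

/-- **Lemma (equivalent characterisations of convergence in a USC Banach bundle).**
Let `(q : M → X)` be an upper semicontinuous Banach bundle over a Hausdorff space `X` and let
`Γ` be a vector space of continuous sections of `M` (i.e. `Γ` is closed under fibrewise addition
and scalar multiplication) whose values `{f x : f ∈ Γ}` are dense in every fibre `M(x)`.
For a net `(m_i)` in `M` (modelled by `mi : ι → M` and a nontrivial filter `l` on `ι`) and a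
point `m ∈ M`, the following are equivalent:
1. `m_i → m` in `M`;
2. `q (m_i) → q m` and for every `ε > 0` there is `g ∈ Γ` with `‖m - g (q m)‖ < ε` and
   `‖m_i - g (q m_i)‖ < ε` for all sufficiently large `i`;
3. `q (m_i) → q m` and for every `f ∈ Γ`,
   `limsup_i ‖m_i - f (q m_i)‖ ≤ ‖m - f (q m)‖` (computed in `ℝ≥0∞` to avoid junk values). -/
theorem tfae_convergence_USCBanachBundle
    {X M : Type*} [TopologicalSpace X] [TopologicalSpace M] [T2Space X]
    {q : M → X} (B : USCBanachBundle X M q)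
    (Γ : Set ((x : X) → {m : M // q m = x}))
    (hΓcont : ∀ f ∈ Γ, Continuous fun x => ((f x : {m : M // q m = x}) : M))
    (hΓadd : ∀ f ∈ Γ, ∀ g ∈ Γ,
      (fun x => letI := B.normedGroup x; f x + g x) ∈ Γ)
    (hΓsmul : ∀ c : ℂ, ∀ f ∈ Γ,
      (fun x => letI := B.normedGroup x; letI := B.normedSpace x; c • f x) ∈ Γ)
    (hΓdense : ∀ (x : X) (v : {m : M // q m = x}) (ε : ℝ), 0 < ε →
      ∃ f ∈ Γ, (letI := B.normedGroup x; ‖v - f x‖ < ε))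
    {ι : Type*} (l : Filter ι) [l.NeBot] (mi : ι → M) (m : M) :
    List.TFAE
      [ Filter.Tendsto mi l (nhds m),
        Filter.Tendsto (fun i => q (mi i)) l (nhds (q m)) ∧
          ∀ ε : ℝ, 0 < ε → ∃ g ∈ Γ,
            B.secDist m g < ε ∧ ∀ᶠ i in l, B.secDist (mi i) g < ε,
        Filter.Tendsto (fun i => q (mi i)) l (nhds (q m)) ∧
          ∀ f ∈ Γ,
            Filter.limsup (fun i => ENNReal.ofReal (B.secDist (mi i) f)) l ≤
              ENNReal.ofReal (B.secDist m f) ] := by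
  tfae_have 1 → 3 := by
    intro h
    refine ⟨(B.cont.tendsto m).comp h, fun f hf => ?_⟩
    refine ENNReal.le_of_forall_pos_le_add fun ε hε _ => ?_
    have hu := USCAux.secDist_usc B f (hΓcont f hf) m (B.secDist m f + ε)
      (lt_add_of_pos_right _ (by exact_mod_cast hε))
    refine limsup_le_of_le (by isBoundedDefault) ?_
    filter_upwards [h.eventually hu] with i hi
    refine (ENNReal.ofReal_le_ofReal hi.le).trans (ENNReal.ofReal_add_le.trans ?_)
    simp
  tfae_have 3 → 2 := by
    rintro ⟨hq, h⟩
    refine ⟨hq, fun ε hε => ?_⟩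
    obtain ⟨f, hf, hd⟩ := hΓdense (q m) ⟨m, rfl⟩ ε hε
    have hd' : B.secDist m f < ε := hd
    refine ⟨f, hf, hd', ?_⟩
    have hlt := (h f hf).trans_lt ((ENNReal.ofReal_lt_ofReal_iff hε).2 hd')
    filter_upwards [eventually_lt_of_limsup_lt hlt] with i hi
    exact (ENNReal.ofReal_lt_ofReal_iff hε).1 hi
  tfae_have 2 → 1 := by
    rintro ⟨hq, h⟩ U hU
    obtain ⟨V, hV, N, hN, δ, hδ, hadd⟩ := USCAux.add_nhds B m hU
    obtain ⟨V', hV', N', hN', δ', hδ', hadd'⟩ := USCAux.add_nhds B m (interior_mem_nhds.2 hV)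
    obtain ⟨g, hg, hgm, hgi⟩ := h (min δ δ') (lt_min hδ hδ')
    have hgV : (g (q m) : M) ∈ interior V := by
      letI := B.normedGroup (q m)
      have hp : q ((g (q m) - ⟨m, rfl⟩ : {n : M // q n = q m}) : M) = q m := USCAux.coe_prop' _
      have e := USCAux.add_coe B.toFibredBanach (⟨m, rfl⟩ : {n : M // q n = q m})
        (g (q m) - ⟨m, rfl⟩) hp
      rw [add_sub_cancel] at e
      rw [← e]
      refine hadd' m (mem_of_mem_nhds hV') _ hp ?_ ?_
      · rw [hp]; exact mem_of_mem_nhds hN'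
      · rw [USCAux.norm_coe, norm_sub_rev]
        exact hgm.trans_le (min_le_right _ _)
    have hgc : Tendsto (fun i => (g (q (mi i)) : M)) l (𝓝 (g (q m) : M)) :=
      ((hΓcont g hg).tendsto (q m)).comp hq
    show ∀ᶠ i in l, mi i ∈ U
    filter_upwards [hgi, hgc (isOpen_interior.mem_nhds hgV), hq.eventually_mem hN] with i h1 h2 h3
    letI := B.normedGroup (q (mi i))
    have hp : q (((⟨mi i, rfl⟩ : {n : M // q n = q (mi i)}) - g (q (mi i)) :
        {n : M // q n = q (mi i)}) : M) = q (mi i) := USCAux.coe_prop' _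
    have hp' := hp.trans (g (q (mi i))).2.symm
    have e := USCAux.add_coe B.toFibredBanach (g (q (mi i)))
      ((⟨mi i, rfl⟩ : {n : M // q n = q (mi i)}) - g (q (mi i))) hp'
    rw [add_sub_cancel] at e
    show mi i ∈ U
    have e' : mi i = _ := e.symm
    rw [e']
    refine hadd _ (interior_subset h2) _ hp' ?_ ?_
    · rw [hp]; exact h3
    · rw [USCAux.norm_coe]
      exact h1.trans_le (min_le_left _ _)
  tfae_finish
end

section
/- Let M with bundle map q_M : M → X and M' with bundle map q_{M'} : M' → X' be two upper semicontinuous Banach bundles, and let ω : X → X' be a homeomorphism. Let Γ be a vector space of continuous sections of M such that the ℂ-linear span of {f(x) : f ∈ Γ} is dense in M(x) for each x ∈ X. Let Φ : M → M' be a map satisfying: (a) for each x ∈ X, Φ(M(x)) ⊆ M'(ω(x)) and the restriction of Φ to M(x) is linear; (b) there exists a constant K > 0 such that ‖Φ(m)‖ ≤ K‖m‖ for all m ∈ M; (c) for each f ∈ Γ, the map Φ ∘ f ∘ ω⁻¹ is a continuous section of M'. Then Φ is continuous. -/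
open Filter Topology

set_option linter.style.haveILetI false

namespace FibredBanach

theorem norm_coe {X M : Type*} {q : M → X} (B : FibredBanach X M q) {x : X}
    (u : {m : M // q m = x}) : B.norm u.1 = (letI := B.normedGroup x; ‖u‖) := by
  obtain ⟨u, rfl⟩ := u
  rfl

theorem add_coe {X M : Type*} {q : M → X} (B : FibredBanach X M q) {x : X}
    (u v : {m : M // q m = x}) (h : q v.1 = q u.1) :
    B.add u.1 v.1 h = (letI := B.normedGroup x; (u + v).1) := by
  obtain ⟨u, rfl⟩ := u
  rfl

theorem smul_coe {X M : Type*} {q : M → X} (B : FibredBanach X M q) {x : X} (c : ℂ)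
    (u : {m : M // q m = x}) :
    B.smul c u.1 = (letI := B.normedGroup x; letI := B.normedSpace x; (c • u).1) := by
  obtain ⟨u, rfl⟩ := u
  rfl

theorem norm_nonneg' {X M : Type*} {q : M → X} (B : FibredBanach X M q) (m : M) :
    0 ≤ B.norm m := by
  letI := B.normedGroup (q m)
  exact norm_nonneg (⟨m, rfl⟩ : {n : M // q n = q m})

end FibredBanach

namespace USCBanachBundle

theorem q_smul {X M : Type*} {q : M → X} (B : FibredBanach X M q) (c : ℂ) (m : M) :
    q (B.smul c m) = q m := by
  letI := B.normedGroup (q m)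
  letI := B.normedSpace (q m)
  exact (c • (⟨m, rfl⟩ : {n : M // q n = q m})).2

/-- Small perturbations stay inside a given neighbourhood. -/
theorem exists_nhds {X M : Type*} [TopologicalSpace X] [TopologicalSpace M] {q : M → X}
    (B : USCBanachBundle X M q) (n0 : M) (U : Set M) (hU : U ∈ 𝓝 n0) :
    ∃ V : Set M, IsOpen V ∧ n0 ∈ V ∧ ∃ δ : ℝ, 0 < δ ∧
      ∀ n ∈ V, ∀ (n' : M) (h : q n' = q n), B.norm n' < δ → B.add n n' h ∈ U := by
  letI := B.normedGroup (q n0)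
  let z : {n : M // q n = q n0} := 0
  have hadd : B.add n0 z.1 z.2 = n0 := by
    have := B.add_coe (⟨n0, rfl⟩ : {n : M // q n = q n0}) z z.2
    simpa [z] using this
  have hc := B.usc2.continuousAt (x := ⟨(n0, z.1), z.2.symm⟩)
  have hpre := hc (show U ∈ 𝓝 _ by simpa only [hadd] using hU)
  rw [mem_map, nhds_subtype_eq_comap, mem_comap] at hpre
  obtain ⟨S, hS, hSU⟩ := hpre
  rw [nhds_prod_eq, mem_prod_iff] at hS
  obtain ⟨V, hV, W, hW, hVW⟩ := hS
  have h4 := B.usc4 (comap q (𝓝 (q n0)) ⊓ comap B.norm (𝓝 0)) (q n0)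
    (tendsto_comap.mono_left inf_le_left) (tendsto_comap.mono_left inf_le_right)
  have hW' := h4 hW
  rw [mem_inf_iff_superset] at hW'
  obtain ⟨A, ⟨N, hN, hNA⟩, C, ⟨D, hD, hDC⟩, hAC⟩ := hW'
  obtain ⟨δ, hδ, hball⟩ := Metric.mem_nhds_iff.1 hD
  have hmem : V ∩ q ⁻¹' N ∈ 𝓝 n0 := inter_mem hV (B.cont.continuousAt hN)
  obtain ⟨V', hV', hVo, hnV⟩ := mem_nhds_iff.1 hmem
  refine ⟨V', hVo, hnV, δ, hδ, fun n hn n' h hlt => ?_⟩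
  have hn'W : n' ∈ W := by
    apply hAC
    refine ⟨hNA ?_, hDC (hball ?_)⟩
    · show q n' ∈ N
      rw [h]
      exact (hV' hn).2
    · have := B.norm_nonneg' n'
      simpa [abs_of_nonneg this] using hlt
  exact hSU (show (⟨(n, n'), h.symm⟩ : {p : M × M // q p.1 = q p.2}) ∈ _ from
    hVW ⟨(hV' hn).1, hn'W⟩)

end USCBanachBundle

/-- **Proposition (continuity criterion for fibrewise-linear bundle maps; cf. Fell–Doran II.13.16
for USC Banach bundles).**
Let `(q_M : M → X)` and `(q_{M'} : M' → X')` be upper semicontinuous Banach bundles and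
`ω : X ≃ₜ X'` a homeomorphism.  Let `Γ` be a vector space of continuous sections of `M` whose
`ℂ`-linear span of values is dense in each fibre `M(x)`.  Let `Φ : M → M'` satisfy:
(a) `Φ` maps `M(x)` into `M'(ω x)` linearly; (b) `‖Φ m‖ ≤ K ‖m‖` for a constant `K > 0`;
(c) for each `f ∈ Γ`, `Φ ∘ f ∘ ω⁻¹` is a continuous section of `M'`.  Then `Φ` is continuous. -/
theorem continuous_of_fibrewise_linear_bounded_sections
    {X X' M M' : Type*} [TopologicalSpace X] [TopologicalSpace X']
    [TopologicalSpace M] [TopologicalSpace M']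
    {qM : M → X} {qM' : M' → X'}
    (B : USCBanachBundle X M qM) (B' : USCBanachBundle X' M' qM')
    (ω : X ≃ₜ X')
    (Γ : Set ((x : X) → {m : M // qM m = x}))
    (hΓcont : ∀ f ∈ Γ, Continuous fun x => ((f x : {m : M // qM m = x}) : M))
    (hΓadd : ∀ f ∈ Γ, ∀ g ∈ Γ,
      (fun x => letI := B.normedGroup x; f x + g x) ∈ Γ)
    (hΓsmul : ∀ c : ℂ, ∀ f ∈ Γ,
      (fun x => letI := B.normedGroup x; letI := B.normedSpace x; c • f x) ∈ Γ)
    (hΓdense : ∀ (x : X) (v : {m : M // qM m = x}) (ε : ℝ), 0 < ε →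
      (letI := B.normedGroup x; letI := B.normedSpace x;
        ∃ w ∈ Submodule.span ℂ {u : {m : M // qM m = x} | ∃ f ∈ Γ, f x = u}, ‖v - w‖ < ε))
    (Φ : M → M')
    (hfib : ∀ m : M, qM' (Φ m) = ω (qM m))
    (hlin : ∀ x : X,
      (letI := B.normedGroup x; letI := B.normedSpace x;
       letI := B'.normedGroup (ω x); letI := B'.normedSpace (ω x);
       IsLinearMap ℂ (fun v : {m : M // qM m = x} =>
         (⟨Φ v.1, by rw [hfib, v.2]⟩ : {m' : M' // qM' m' = ω x}))))
    (K : ℝ) (hK : 0 < K)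
    (hbound : ∀ m : M, B'.norm (Φ m) ≤ K * B.norm m)
    (hsec : ∀ f ∈ Γ, Continuous (fun x' : X' => Φ ((f (ω.symm x') : {m : M // qM m = ω.symm x'}) : M)) ∧
      ∀ x' : X', qM' (Φ ((f (ω.symm x') : {m : M // qM m = ω.symm x'}) : M)) = x') :
    Continuous Φ := by
  have hlinadd : ∀ (x : X) (u v : {m : M // qM m = x}) (h : qM' (Φ v.1) = qM' (Φ u.1)),
      Φ (letI := B.normedGroup x; (u + v).1) = B'.add (Φ u.1) (Φ v.1) h := by
    intro x u v h
    letI := B.normedGroup x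
    letI := B.normedSpace x
    letI := B'.normedGroup (ω x)
    letI := B'.normedSpace (ω x)
    have h1 := congrArg Subtype.val ((hlin x).map_add u v)
    have h2 := B'.add_coe (x := ω x) ⟨Φ u.1, by rw [hfib, u.2]⟩ ⟨Φ v.1, by rw [hfib, v.2]⟩ h
    exact h1.trans h2.symm
  -- approximating continuous sections
  have happ : ∀ (m0 : M) (ε : ℝ), 0 < ε → ∃ f : (x : X) → {m : M // qM m = x},
      Continuous (fun x => (f x).1) ∧ Continuous (fun x => Φ (f x).1) ∧
      (letI := B.normedGroup (qM m0); ‖(⟨m0, rfl⟩ : {m : M // qM m = qM m0}) - f (qM m0)‖ < ε) := by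
    intro m0 ε hε
    letI := B.normedGroup (qM m0)
    letI := B.normedSpace (qM m0)
    obtain ⟨w, hw, hlt⟩ := hΓdense (qM m0) ⟨m0, rfl⟩ ε hε
    have key : w = 0 ∨ ∃ f ∈ Γ, f (qM m0) = w := by
      clear hlt
      induction hw using Submodule.span_induction with
      | mem u hu => exact Or.inr hu
      | zero => exact Or.inl rfl
      | add a b _ _ ha hb =>
        rcases ha with rfl | ⟨f, hf, rfl⟩
        · simpa using hb
        · rcases hb with rfl | ⟨g, hg, rfl⟩
          · exact Or.inr ⟨f, hf, (add_zero _).symm⟩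
          · exact Or.inr ⟨_, hΓadd f hf g hg, rfl⟩
      | smul c a _ ha =>
        rcases ha with rfl | ⟨f, hf, rfl⟩
        · exact Or.inl (smul_zero c)
        · exact Or.inr ⟨_, hΓsmul c f hf, rfl⟩
    rcases key with rfl | ⟨f, hf, rfl⟩
    · refine ⟨fun x => letI := B.normedGroup x; 0, ?_, ?_, hlt⟩
      · rw [continuous_iff_continuousAt]
        intro x
        refine B.usc4 _ x ?_ ?_
        · rw [tendsto_map'_iff]
          refine tendsto_id.congr fun y => ?_
          letI := B.normedGroup y
          exact (0 : {m : M // qM m = y}).2.symm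
        · rw [tendsto_map'_iff]
          refine tendsto_const_nhds.congr fun y => ?_
          letI := B.normedGroup y
          exact ((B.norm_coe (0 : {m : M // qM m = y})).trans norm_zero).symm
      · rw [continuous_iff_continuousAt]
        intro x
        have hz : Φ (letI := B.normedGroup x; (0 : {m : M // qM m = x}).1) = B'.zeroAt (ω x) := by
          letI := B.normedGroup x
          letI := B.normedSpace x
          letI := B'.normedGroup (ω x)
          letI := B'.normedSpace (ω x)
          exact congrArg Subtype.val (hlin x).map_zero
        unfold ContinuousAt
        beta_reduce
        rw [hz]
        refine B'.usc4 _ (ω x) ?_ ?_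
        · rw [tendsto_map'_iff]
          refine (ω.continuous.tendsto x).congr fun y => ?_
          letI := B.normedGroup y
          exact ((hfib _).trans (congrArg ω (0 : {m : M // qM m = y}).2)).symm
        · rw [tendsto_map'_iff]
          refine tendsto_const_nhds.congr fun y => ?_
          letI := B.normedGroup y
          have h1 := hbound (0 : {m : M // qM m = y}).1
          have h2 := (B.norm_coe (0 : {m : M // qM m = y})).trans norm_zero
          rw [h2, mul_zero] at h1
          exact (le_antisymm h1 (B'.norm_nonneg' _)).symm
    · refine ⟨f, hΓcont f hf, ?_, hlt⟩
      have := (hsec f hf).1.comp ω.continuous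
      refine this.congr fun x => ?_
      show Φ (f (ω.symm (ω x))).1 = _
      rw [ω.symm_apply_apply]
  rw [continuous_iff_continuousAt]
  intro m0 U hU
  obtain ⟨V, hVo, hV0, δ, hδ, hV⟩ := B'.exists_nhds _ U hU
  obtain ⟨V2, -, hV20, δ2, hδ2, hV2⟩ := B'.exists_nhds _ V (hVo.mem_nhds hV0)
  obtain ⟨f, hfc, hΦf, hlt⟩ := happ m0 (min δ δ2 / K) (div_pos (lt_min hδ hδ2) hK)
  rw [lt_div_iff₀ hK, mul_comm] at hlt
  let d : M → M := fun m => letI := B.normedGroup (qM m);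
    ((⟨m, rfl⟩ : {n : M // qM n = qM m}) - f (qM m)).1
  have hd : ∀ m, qM (d m) = qM m := fun m =>
    letI := B.normedGroup (qM m)
    ((⟨m, rfl⟩ : {n : M // qM n = qM m}) - f (qM m)).2
  have hdc : Continuous d := by
    have hs := (B.usc3 (-1)).comp (hfc.comp B.cont)
    have hq : ∀ m, qM m = qM (B.smul (-1) (f (qM m)).1) := fun m => by
      rw [USCBanachBundle.q_smul (q := qM), (f (qM m)).2]
    have := B.usc2.comp ((continuous_id.prodMk hs).subtype_mk hq)
    refine this.congr fun m => ?_
    letI := B.normedGroup (qM m)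
    letI := B.normedSpace (qM m)
    have e1 := B.smul_coe (-1) (f (qM m))
    have e2 := B.add_coe (⟨m, rfl⟩ : {n : M // qM n = qM m}) ((-1 : ℂ) • f (qM m))
      ((-1 : ℂ) • f (qM m)).2
    have e3 : (⟨m, rfl⟩ : {n : M // qM n = qM m}) + (-1 : ℂ) • f (qM m)
        = (⟨m, rfl⟩ : {n : M // qM n = qM m}) - f (qM m) := by
      rw [neg_one_smul, sub_eq_add_neg]
    show B.add m (B.smul (-1) (f (qM m)).1) _ = _
    simp only [e1]
    exact e2.trans (congrArg Subtype.val e3)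
  have hd0 : B.norm (d m0) < δ / K := by
    rw [lt_div_iff₀ hK, mul_comm]
    refine lt_of_le_of_lt (le_of_eq ?_) (hlt.trans_le (min_le_left _ _))
    congr 1
    exact B.norm_coe _
  have hev1 : ∀ᶠ m in 𝓝 m0, B.norm (d m) < δ / K :=
    hdc.continuousAt.eventually (B.usc1 (d m0) _ hd0)
  have hn1 : Φ (f (qM m0)).1 ∈ V := by
    letI := B.normedGroup (qM m0)
    let e : {n : M // qM n = qM m0} := f (qM m0) - ⟨m0, rfl⟩
    have hq : qM' (Φ e.1) = qM' (Φ m0) := by rw [hfib, hfib, e.2]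
    have h1 := hV2 _ hV20 (Φ e.1) hq ?_
    · have h2 := hlinadd (qM m0) ⟨m0, rfl⟩ e hq
      rw [← h2] at h1
      have h3 : (⟨m0, rfl⟩ : {n : M // qM n = qM m0}) + e = f (qM m0) := by
        simp only [e]; abel
      rwa [h3] at h1
    · refine (hbound _).trans_lt ?_
      rw [B.norm_coe e]
      have h4 : ‖e‖ = ‖(⟨m0, rfl⟩ : {n : M // qM n = qM m0}) - f (qM m0)‖ := norm_sub_rev _ _
      rw [h4]
      exact hlt.trans_le (min_le_right _ _)
  have hev2 : ∀ᶠ m in 𝓝 m0, Φ (f (qM m)).1 ∈ V :=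
    (hΦf.comp B.cont).continuousAt.eventually (hVo.mem_nhds hn1)
  rw [mem_map]
  filter_upwards [hev1, hev2] with m h1 h2
  letI := B.normedGroup (qM m)
  have hq : qM' (Φ (d m)) = qM' (Φ (f (qM m)).1) := by rw [hfib, hfib, hd, (f (qM m)).2]
  have h3 := hV _ h2 (Φ (d m)) hq ?_
  · have h4 := hlinadd (qM m) (f (qM m)) ((⟨m, rfl⟩ : {n : M // qM n = qM m}) - f (qM m)) hq
    have h5 : f (qM m) + ((⟨m, rfl⟩ : {n : M // qM n = qM m}) - f (qM m)) = ⟨m, rfl⟩ := by abel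
    rw [h5] at h4
    show Φ m ∈ U
    exact Set.mem_of_eq_of_mem h4 h3
  · refine (hbound _).trans_lt ?_
    rwa [lt_div_iff₀ hK, mul_comm] at h1
end

section
/- Let X and Z be topological spaces, let s : X → Z be a continuous open map, and let W ⊆ X × X be an open set. Define a relation on X by x ∼ x' if and only if s(x) = s(x') and (x,x') ∈ W, and assume that ∼ is an equivalence relation on X. Then the quotient map π : X → X/∼ is an open map. -/
/-- **Lemma (openness of the quotient map of a pre-equivalence).**
Let `s : X → Z` be a continuous open map and `W ⊆ X × X` an open set.  Suppose the relation
`x ∼ x' ↔ (s x = s x' ∧ (x,x') ∈ W)` is an equivalence relation on `X`.  Then the quotient map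
`π : X → X/∼` (with the quotient topology on `X/∼`) is an open map. -/
theorem isOpenMap_quotient_mk_of_open_graph
    {X Z : Type*} [TopologicalSpace X] [TopologicalSpace Z]
    (s : X → Z) (hsc : Continuous s) (hso : IsOpenMap s)
    (W : Set (X × X)) (hW : IsOpen W)
    (r : Setoid X) (hr : ∀ x x' : X, r.r x x' ↔ (s x = s x' ∧ (x, x') ∈ W)) :
    IsOpenMap (Quotient.mk r) := by
  intro U hU
  have key : IsOpen (Quotient.mk r ⁻¹' (Quotient.mk r '' U)) := by
    rw [isOpen_iff_mem_nhds]
    rintro y ⟨u, huU, huy⟩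
    obtain ⟨hs, hw⟩ := (hr u y).1 (Quotient.exact huy)
    obtain ⟨A, B, hA, hB, huA, hyB, hAB⟩ := isOpen_prod_iff.1 hW u y hw
    have hopen : IsOpen (B ∩ s ⁻¹' (s '' (A ∩ U))) :=
      hB.inter ((hso _ (hA.inter hU)).preimage hsc)
    refine Filter.mem_of_superset (hopen.mem_nhds ⟨hyB, u, ⟨huA, huU⟩, hs⟩) ?_
    rintro y' ⟨hy'B, u', ⟨hu'A, hu'U⟩, hs'⟩
    exact ⟨u', hu'U, Quotient.sound ((hr u' y').2 ⟨hs', hAB ⟨hu'A, hy'B⟩⟩)⟩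
  exact key
end
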